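/- Theorem (convergence of the nudged particle filter): Let (π_t)_{0≤t≤T} be the optimal filters of a state-space model with positive bounded likelihoods g_t, prior π_0 and Markov kernels τ_t. Let π_t^N be the output of the nudged particle filter in which, at each step, at most M ≤ √N particles are modified by an arbitrary map α_t : X → X before weighting and multinomial resampling. Then for every t ∈ {1,…,T}, every bounded measurable φ : X → ℝ, and every p ≥ 1, there exists a constant c_{t,p} < ∞ independent of N such that ‖(φ, π_t^N) − (φ, π_t)‖_p ≤ c_{t,p}‖φ‖_∞/√N. -/

import Mathlib

open MeasureTheory ProbabilityTheory

namespace NuPF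

/-- Empirical average. -/
noncomputable def avg {X : Type*} {N : ℕ} (φ : X → ℝ) (c : Fin N → X) : ℝ :=
  (1 / (N : ℝ)) * ∑ i, φ (c i)

lemma measurable_avg {X : Type*} [MeasurableSpace X] {N : ℕ} {φ : X → ℝ} (hφ : Measurable φ) :
    Measurable (avg (N := N) φ) := by
  unfold avg
  fun_prop

/-- Measurability of product measures in a parameter. -/
lemma measurable_pi_measure {A X : Type*} [MeasurableSpace A] [MeasurableSpace X] {N : ℕ}
    (κ : A → Fin N → Measure X) [∀ a i, IsProbabilityMeasure (κ a i)]
    (h : ∀ i, Measurable fun a => κ a i) : Measurable fun a => Measure.pi (κ a) := by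
  refine Measurable.measure_of_isPiSystem_of_isProbabilityMeasure generateFrom_pi.symm
    isPiSystem_pi ?_
  rintro s ⟨u, hu, rfl⟩
  simp_rw [Measure.pi_pi]
  refine Finset.measurable_prod _ fun i _ => ?_
  exact (Measure.measurable_coe (hu i (Set.mem_univ i))).comp (h i)

/-- One conditional step of the triangle inequality. -/
lemma bind_step {A B : Type*} [MeasurableSpace A] [MeasurableSpace B] (ν : Measure A)
    [IsProbabilityMeasure ν] (κ : A → Measure B) (hκ : Measurable κ)
    [∀ a, IsProbabilityMeasure (κ a)] {p : ℝ} (hp : 1 ≤ p) (f : B → ℝ) (hf : Measurable f)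
    (h : A → ℝ) (hh : Measurable h) (a : ℝ) (K C : ENNReal)
    (hK : ∀ c, ∫⁻ b, ‖f b - h c‖ₑ ^ p ∂(κ c) ≤ K)
    (hC : ∫⁻ c, ‖h c - a‖ₑ ^ p ∂ν ≤ C) :
    ∫⁻ b, ‖f b - a‖ₑ ^ p ∂(ν.bind κ) ≤ 2 ^ (p - 1) * (K + C) := by
  have key : ∀ c, ∫⁻ b, ‖f b - a‖ₑ ^ p ∂(κ c) ≤ 2 ^ (p - 1) * (K + ‖h c - a‖ₑ ^ p) := by
    intro c
    calc ∫⁻ b, ‖f b - a‖ₑ ^ p ∂(κ c)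
        ≤ ∫⁻ b, 2 ^ (p - 1) * (‖f b - h c‖ₑ ^ p + ‖h c - a‖ₑ ^ p) ∂(κ c) := by
          refine lintegral_mono fun b => ?_
          refine le_trans ?_ (ENNReal.rpow_add_le_mul_rpow_add_rpow _ _ hp)
          refine ENNReal.rpow_le_rpow ?_ (by linarith)
          calc ‖f b - a‖ₑ = ‖(f b - h c) + (h c - a)‖ₑ := by congr 1; ring
            _ ≤ _ := enorm_add_le _ _
      _ = 2 ^ (p - 1) * (∫⁻ b, ‖f b - h c‖ₑ ^ p ∂(κ c) + ‖h c - a‖ₑ ^ p) := by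
          rw [lintegral_const_mul _ (by fun_prop), lintegral_add_right _ (by fun_prop)]
          simp
      _ ≤ _ := by gcongr; exact hK c
  rw [Measure.lintegral_bind hκ.aemeasurable (by fun_prop)]
  refine (lintegral_mono key).trans ?_
  rw [lintegral_const_mul _ (by fun_prop), lintegral_add_right _ (by fun_prop)]
  simp only [lintegral_const, measure_univ, mul_one]
  gcongr

/-- Sub-Gaussian version of the Marcinkiewicz-Zygmund inequality. -/
lemma mz {X : Type*} [MeasurableSpace X] {N : ℕ} (hN : 0 < N) (μ : Fin N → Measure X)
    [∀ i, IsProbabilityMeasure (μ i)] {p : ℝ} (hp : 1 ≤ p) (φ : X → ℝ) (hφ : Measurable φ)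
    (hb : ∀ x, |φ x| ≤ 1) :
    ∫⁻ x, ‖avg φ x - (1 / (N : ℝ)) * ∑ i, ∫ y, φ y ∂(μ i)‖ₑ ^ p ∂(Measure.pi μ) ≤
      ENNReal.ofReal (2 * p ^ p * Real.exp (1 / 2) * (1 / Real.sqrt N) ^ p) := by
  have hN' : (0 : ℝ) < N := by exact_mod_cast hN
  have hs : (0 : ℝ) < Real.sqrt N := Real.sqrt_pos.2 hN'
  have hsq : Real.sqrt N * Real.sqrt N = N := Real.mul_self_sqrt hN'.le
  set S : (Fin N → X) → ℝ := fun x => ∑ i, (φ (x i) - ∫ y, φ y ∂(μ i)) with hS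
  have hsub : HasSubgaussianMGF S (∑ i : Fin N, 1) (Measure.pi μ) := by
    refine HasSubgaussianMGF.sum_of_iIndepFun
      (X := fun i (x : Fin N → X) => φ (x i) - ∫ y, φ y ∂(μ i)) ?_ ?_
    · exact iIndepFun_pi (X := fun i y => φ y - ∫ y, φ y ∂(μ i))
        (fun i => (hφ.sub_const _).aemeasurable)
    · intro i _
      have := hasSubgaussianMGF_of_mem_Icc (μ := Measure.pi μ) (X := fun x => φ (x i))
        (a := -1) (b := 1) (hφ.comp (measurable_pi_apply i)).aemeasurable
        (ae_of_all _ fun x => abs_le.1 (hb (x i)))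
      have hI : ∫ x, φ (x i) ∂(Measure.pi μ) = ∫ y, φ y ∂(μ i) := by
        conv_rhs => rw [← (measurePreserving_eval μ i).map_eq]
        rw [integral_map (measurable_pi_apply i).aemeasurable hφ.aestronglyMeasurable]
      rw [hI] at this
      convert this using 1
      ext
      norm_num
  have hSm : Measurable S := by fun_prop
  have havg : ∀ x, avg φ x - (1 / (N : ℝ)) * ∑ i, ∫ y, φ y ∂(μ i) = (1 / (N : ℝ)) * S x := by
    intro x
    simp only [avg, hS, Finset.sum_sub_distrib]
    ring
  set t : ℝ := 1 / Real.sqrt N with ht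
  have ht0 : 0 < t := by positivity
  have hmgf : ∀ u : ℝ, u ^ 2 = t ^ 2 →
      ∫⁻ x, ENNReal.ofReal (Real.exp (u * S x)) ∂(Measure.pi μ) ≤
        ENNReal.ofReal (Real.exp (1 / 2)) := by
    intro u hu
    rw [← ofReal_integral_eq_lintegral_ofReal (hsub.integrable_exp_mul u)
      (ae_of_all _ fun x => (Real.exp_pos _).le)]
    refine ENNReal.ofReal_le_ofReal ((hsub.mgf_le u).trans_eq ?_)
    congr 1
    rw [hu, ht, div_pow, Real.sq_sqrt hN'.le]
    simp
    field_simp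
  have hpt : ∀ x, ‖avg φ x - (1 / (N : ℝ)) * ∑ i, ∫ y, φ y ∂(μ i)‖ₑ ^ p ≤
      ENNReal.ofReal (p ^ p * t ^ p) * (ENNReal.ofReal (Real.exp (t * S x)) +
        ENNReal.ofReal (Real.exp (-t * S x))) := by
    intro x
    rw [havg, Real.enorm_eq_ofReal_abs, ENNReal.ofReal_rpow_of_nonneg (abs_nonneg _) (by linarith),
      ← ENNReal.ofReal_add (Real.exp_pos _).le (Real.exp_pos _).le,
      ← ENNReal.ofReal_mul (by positivity)]
    refine ENNReal.ofReal_le_ofReal ?_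
    have h1 := rpow_abs_le_mul_exp_abs (S x) (t := t) (p := p) (by linarith) ht0.ne'
    have h2 : Real.exp (|t| * |S x|) ≤ Real.exp (t * S x) + Real.exp (-t * S x) := by
      rw [abs_of_pos ht0]
      rcases abs_cases (S x) with ⟨h, _⟩ | ⟨h, _⟩
      · rw [h]; linarith [Real.exp_pos (-t * S x)]
      · rw [h, mul_neg, ← neg_mul]; linarith [Real.exp_pos (t * S x)]
    have h3 : (1 / (N : ℝ)) ^ p * (p / |t|) ^ p = p ^ p * t ^ p := by
      rw [← Real.mul_rpow (by positivity) (by positivity), ← Real.mul_rpow (by linarith) ht0.le,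
        abs_of_pos ht0]
      congr 1
      rw [ht]
      field_simp
      nlinarith
    rw [abs_mul, Real.mul_rpow (abs_nonneg _) (abs_nonneg _), abs_of_pos (by positivity)]
    calc (1 / (N : ℝ)) ^ p * |S x| ^ p
        ≤ (1 / (N : ℝ)) ^ p * ((p / |t|) ^ p * Real.exp (|t| * |S x|)) := by gcongr
      _ = (p ^ p * t ^ p) * Real.exp (|t| * |S x|) := by rw [← mul_assoc, h3]
      _ ≤ _ := by gcongr
  refine (lintegral_mono hpt).trans ?_
  rw [lintegral_const_mul _ (by fun_prop), lintegral_add_right _ (by fun_prop)]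
  calc _ ≤ ENNReal.ofReal (p ^ p * t ^ p) * (ENNReal.ofReal (Real.exp (1 / 2)) +
        ENNReal.ofReal (Real.exp (1 / 2))) := by
        gcongr
        · exact hmgf t rfl
        · exact hmgf (-t) (by ring)
    _ = _ := by
        rw [← ENNReal.ofReal_add (by positivity) (by positivity), ← ENNReal.ofReal_mul (by positivity)]
        congr 1
        ring

/-- The multinomial resampling distribution. -/
noncomputable def res {X : Type*} [MeasurableSpace X] {N : ℕ} (g : X → ℝ) (y : Fin N → X) :
    Measure X :=
  ∑ i : Fin N, (ENNReal.ofReal (g (y i)) / ∑ j : Fin N, ENNReal.ofReal (g (y j))) •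
    Measure.dirac (y i)

section res
variable {X : Type*} [MeasurableSpace X] {N : ℕ} {g : X → ℝ}

lemma res_prob (hN : 0 < N) (hg : ∀ x, 0 < g x) (y : Fin N → X) :
    IsProbabilityMeasure (res g y) := by
  constructor
  simp only [res, Measure.coe_finsetSum, Measure.coe_smul, Finset.sum_apply, Pi.smul_apply,
    measure_univ, smul_eq_mul, mul_one]
  simp only [div_eq_mul_inv]
  rw [← Finset.sum_mul]
  refine ENNReal.mul_inv_cancel ?_ ?_
  · have : 0 < ENNReal.ofReal (g (y ⟨0, hN⟩)) := ENNReal.ofReal_pos.2 (hg _)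
    refine (this.trans_le ?_).ne'
    exact Finset.single_le_sum (f := fun j => ENNReal.ofReal (g (y j)))
      (fun _ _ => zero_le) (Finset.mem_univ _)
  · exact ENNReal.sum_ne_top.2 fun _ _ => ENNReal.ofReal_ne_top

lemma res_measurable (hgm : Measurable g) : Measurable (res (N := N) g) := by
  refine Measure.measurable_of_measurable_coe _ fun s hs => ?_
  simp only [res, Measure.coe_finsetSum, Measure.coe_smul, Finset.sum_apply, Pi.smul_apply,
    smul_eq_mul]
  refine Finset.measurable_sum _ fun i _ => ?_
  refine Measurable.mul (by fun_prop) ?_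
  exact (Measure.measurable_coe hs).comp (Measure.measurable_dirac.comp (measurable_pi_apply i))

lemma res_integral (hg : ∀ x, 0 < g x) (y : Fin N → X) {φ : X → ℝ} (hφ : Measurable φ) :
    ∫ x, φ x ∂(res g y) = (∑ i, g (y i) * φ (y i)) / ∑ i, g (y i) := by
  unfold res
  rw [integral_finsetSum_measure]
  · rw [Finset.sum_div]
    refine Finset.sum_congr rfl fun i _ => ?_
    rw [integral_smul_measure, integral_dirac' _ _ hφ.stronglyMeasurable, ENNReal.toReal_div,
      ← ENNReal.ofReal_sum_of_nonneg fun j _ => (hg _).le, ENNReal.toReal_ofReal (hg _).le,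
      ENNReal.toReal_ofReal (Finset.sum_nonneg fun j _ => (hg _).le), smul_eq_mul]
    ring
  · intro i _
    refine Integrable.smul_measure ?_ ?_
    · exact integrable_dirac' hφ.stronglyMeasurable (by simp)
    · refine (ENNReal.div_lt_top ENNReal.ofReal_ne_top ?_).ne
      have : 0 < ENNReal.ofReal (g (y i)) := ENNReal.ofReal_pos.2 (hg _)
      refine (this.trans_le ?_).ne'
      exact Finset.single_le_sum (f := fun j => ENNReal.ofReal (g (y j)))
        (fun _ _ => zero_le) (Finset.mem_univ _)

end res

/-- The nudging map on configurations. -/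
noncomputable def nud {X : Type*} {N : ℕ} (I : Finset (Fin N)) (α : X → X) (x : Fin N → X) :
    Fin N → X := fun i => if i ∈ I then α (x i) else x i

lemma measurable_nud {X : Type*} [MeasurableSpace X] {N : ℕ} (I : Finset (Fin N)) {α : X → X}
    (hα : Measurable α) : Measurable (nud I α) := by
  refine measurable_pi_lambda _ fun i => ?_
  unfold nud
  split_ifs
  · exact hα.comp (measurable_pi_apply i)
  · exact measurable_pi_apply i

lemma nud_close {X : Type*} {N : ℕ} (hN : 0 < N) (I : Finset (Fin N))
    (hI : (I.card : ℝ) ≤ Real.sqrt N) (α : X → X) (x : Fin N → X) (φ : X → ℝ)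
    (hb : ∀ x, |φ x| ≤ 1) : |avg φ (nud I α x) - avg φ x| ≤ 2 * (1 / Real.sqrt N) := by
  have hN' : (0 : ℝ) < N := by exact_mod_cast hN
  have hs : (0 : ℝ) < Real.sqrt N := Real.sqrt_pos.2 hN'
  have hsq : Real.sqrt N * Real.sqrt N = N := Real.mul_self_sqrt hN'.le
  have h1 : |∑ i, (φ (nud I α x i) - φ (x i))| ≤ 2 * Real.sqrt N := by
    calc |∑ i, (φ (nud I α x i) - φ (x i))|
        ≤ ∑ i, |φ (nud I α x i) - φ (x i)| := Finset.abs_sum_le_sum_abs _ _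
      _ ≤ ∑ i, if i ∈ I then (2 : ℝ) else 0 := by
          refine Finset.sum_le_sum fun i _ => ?_
          unfold nud
          split_ifs
          · have h1 := abs_le.1 (hb (α (x i)))
            have h2 := abs_le.1 (hb (x i))
            rw [abs_le]
            constructor <;> linarith
          · simp
      _ = I.card * 2 := by simp
      _ ≤ _ := by linarith
  unfold avg
  rw [← mul_sub, ← Finset.sum_sub_distrib, abs_mul, abs_of_pos (by positivity)]
  calc 1 / (N : ℝ) * |∑ i, (φ (nud I α x i) - φ (x i))| ≤ 1 / (N : ℝ) * (2 * Real.sqrt N) := by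
        gcongr
    _ = _ := by
        field_simp
        nlinarith

lemma ratio {W a b A B : ℝ} (hB : 0 < B) (hW : |W| ≤ 1) (hab : a = W * b) :
    |W - A / B| ≤ (1 / B) * (|a - A| + |b - B|) := by
  have : W - A / B = (1 / B) * ((a - A) - W * (b - B)) := by
    field_simp
    rw [hab]
    ring
  rw [this, abs_mul, abs_of_pos (by positivity)]
  gcongr
  calc |a - A - W * (b - B)| ≤ |a - A| + |W * (b - B)| := abs_sub _ _
    _ ≤ _ := by
      rw [abs_mul]
      nlinarith [abs_nonneg (b - B)]

lemma integral_abs_le_one {X : Type*} [MeasurableSpace X] (μ : Measure X) [IsProbabilityMeasure μ]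
    {φ : X → ℝ} (hb : ∀ x, |φ x| ≤ 1) : |∫ x, φ x ∂μ| ≤ 1 := by
  have := norm_integral_le_of_norm_le_const (μ := μ) (f := φ) (C := 1) (ae_of_all _ hb)
  simpa using this

/-- One full step of the filter. -/
lemma step {X : Type*} [MeasurableSpace X] (τ : Kernel X X) [IsMarkovKernel τ]
    (g : X → ℝ) (hgm : Measurable g) (hg : ∀ x, 0 < g x) (hgb : BddAbove (Set.range g))
    (π π' ξ : Measure X) [IsProbabilityMeasure π] (hξ : ξ = π.bind fun x => τ x)
    (hgpred : 0 < ∫ x, g x ∂ξ)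
    (hπ : ∀ (φ : X → ℝ), Measurable φ → BddAbove (Set.range fun x => |φ x|) →
      ∫ x, φ x ∂π' = (∫ x, φ x * g x ∂ξ) / ∫ x, g x ∂ξ)
    (α : X → X) (hα : Measurable α) {p : ℝ} (hp : 1 ≤ p) (C : ENNReal) (hC : C ≠ ⊤) :
    ∃ C' : ENNReal, C' ≠ ⊤ ∧ ∀ (N : ℕ), 0 < N → ∀ I : Finset (Fin N),
      (I.card : ℝ) ≤ Real.sqrt N → ∀ ν : Measure (Fin N → X), IsProbabilityMeasure ν →
      (∀ φ : X → ℝ, Measurable φ → (∀ x, |φ x| ≤ 1) →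
        ∫⁻ c, ‖avg φ c - ∫ x, φ x ∂π‖ₑ ^ p ∂ν ≤ C * ENNReal.ofReal (1 / Real.sqrt N) ^ p) →
      ∀ ν' : Measure (Fin N → X), ν' = (ν.bind fun c =>
        (Measure.pi fun i => τ (c i)).bind fun xb => Measure.pi fun _ : Fin N =>
          res g (nud I α xb)) →
      IsProbabilityMeasure ν' ∧ ∀ φ : X → ℝ, Measurable φ → (∀ x, |φ x| ≤ 1) →
        ∫⁻ c, ‖avg φ c - ∫ x, φ x ∂π'‖ₑ ^ p ∂ν' ≤ C' * ENNReal.ofReal (1 / Real.sqrt N) ^ p := by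
  have hp0 : 0 ≤ p := by linarith
  obtain ⟨G₀, hG₀⟩ := hgb
  set G : ℝ := max G₀ 1 with hG
  have hGpos : 0 < G := lt_of_lt_of_le one_pos (le_max_right _ _)
  have hgG : ∀ x, g x ≤ G := fun x => (hG₀ ⟨x, rfl⟩).trans (le_max_left _ _)
  set h : X → ℝ := fun x => g x / G with hh
  have hhm : Measurable h := hgm.div_const _
  have hh0 : ∀ x, 0 < h x := fun x => div_pos (hg x) hGpos
  have hh1 : ∀ x, |h x| ≤ 1 := fun x => by
    rw [abs_of_pos (hh0 x)]; exact (div_le_one hGpos).2 (hgG x)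
  have hξh : ∫ x, h x ∂ξ = (∫ x, g x ∂ξ) / G := integral_div _ _
  have hB : 0 < ∫ x, h x ∂ξ := by rw [hξh]; positivity
  set K : ENNReal := ENNReal.ofReal (2 * p ^ p * Real.exp (1 / 2)) with hK
  set L : ENNReal := ENNReal.ofReal (1 / ∫ x, h x ∂ξ) with hL
  set C1 : ENNReal := 2 ^ (p - 1) * (K + C) with hC1
  set C2 : ENNReal := 2 ^ (p - 1) * (2 ^ p + C1) with hC2
  set C3 : ENNReal := L ^ p * (2 ^ (p - 1) * (C2 + C2)) with hC3
  have htwo : ∀ q : ℝ, 0 ≤ q → (2 : ENNReal) ^ q ≠ ⊤ := fun q hq =>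
    ENNReal.rpow_ne_top_of_nonneg hq (by simp)
  have hC1t : C1 ≠ ⊤ := ENNReal.mul_ne_top (htwo _ (by linarith))
    (ENNReal.add_ne_top.2 ⟨ENNReal.ofReal_ne_top, hC⟩)
  have hC2t : C2 ≠ ⊤ := ENNReal.mul_ne_top (htwo _ (by linarith))
    (ENNReal.add_ne_top.2 ⟨htwo _ hp0, hC1t⟩)
  have hC3t : C3 ≠ ⊤ := ENNReal.mul_ne_top
    (ENNReal.rpow_ne_top_of_nonneg hp0 ENNReal.ofReal_ne_top)
    (ENNReal.mul_ne_top (htwo _ (by linarith)) (ENNReal.add_ne_top.2 ⟨hC2t, hC2t⟩))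
  refine ⟨2 ^ (p - 1) * (K + C3), ENNReal.mul_ne_top (htwo _ (by linarith))
    (ENNReal.add_ne_top.2 ⟨ENNReal.ofReal_ne_top, hC3t⟩), ?_⟩
  intro N hN I hI ν hν hA ν' hν'
  set ρ : ENNReal := ENNReal.ofReal (1 / Real.sqrt N) ^ p with hρ
  have hmz : ∀ (μ : Fin N → Measure X), (∀ i, IsProbabilityMeasure (μ i)) → ∀ φ : X → ℝ,
      Measurable φ → (∀ x, |φ x| ≤ 1) →
      ∫⁻ x, ‖avg φ x - (1 / (N : ℝ)) * ∑ i, ∫ y, φ y ∂(μ i)‖ₑ ^ p ∂(Measure.pi μ) ≤ K * ρ := by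
    intro μ _ φ hφ hb
    refine (mz hN μ hp φ hφ hb).trans_eq ?_
    rw [ENNReal.ofReal_mul (by positivity), hρ,
      ENNReal.ofReal_rpow_of_nonneg (by positivity) hp0]
  have hres : ∀ xb : Fin N → X, IsProbabilityMeasure (res g (nud I α xb)) :=
    fun xb => res_prob hN hg _
  have hκ1 : Measurable fun c : Fin N → X => Measure.pi fun i => τ (c i) :=
    measurable_pi_measure (fun (c : Fin N → X) i => τ (c i))
      (fun i => τ.measurable.comp (measurable_pi_apply i))
  have hκ2 : Measurable fun xb : Fin N → X => Measure.pi fun _ : Fin N => res g (nud I α xb) :=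
    measurable_pi_measure (fun (xb : Fin N → X) (_ : Fin N) => res g (nud I α xb))
      (fun i => (res_measurable hgm).comp (measurable_nud I hα))
  set η : Measure (Fin N → X) :=
    ν.bind (fun c : Fin N → X => Measure.pi fun i => τ (c i)) with hη
  have hηp : IsProbabilityMeasure η :=
    isProbabilityMeasure_bind hκ1.aemeasurable (ae_of_all _ fun c => inferInstance)
  have hν'' : ν' = η.bind fun xb => Measure.pi fun _ : Fin N => res g (nud I α xb) := by
    rw [hν', hη, Measure.bind_bind hκ1.aemeasurable hκ2.aemeasurable]
  have hξφ : ∀ φ : X → ℝ, Measurable φ → (∀ x, |φ x| ≤ 1) →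
      ∫ x, φ x ∂ξ = ∫ x, (∫ y, φ y ∂(τ x)) ∂π := by
    intro φ hφ hb
    have hpr : IsProbabilityMeasure (π.bind fun x => τ x) :=
      isProbabilityMeasure_bind τ.measurable.aemeasurable (ae_of_all _ fun c => inferInstance)
    rw [hξ]
    have hint : Integrable φ (π.bind fun x => τ x) :=
      Integrable.of_bound hφ.aestronglyMeasurable 1 (ae_of_all _ hb)
    have heq : (π.bind fun x => τ x) = (τ ∘ₖ Kernel.const Unit π) () := by
      rw [Kernel.comp_apply, Kernel.const_apply]
    rw [heq] at hint ⊢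
    rw [Kernel.integral_comp hint, Kernel.const_apply]
  have hS1 : ∀ φ : X → ℝ, Measurable φ → (∀ x, |φ x| ≤ 1) →
      ∫⁻ c, ‖avg φ c - ∫ x, φ x ∂ξ‖ₑ ^ p ∂η ≤ C1 * ρ := by
    intro φ hφ hb
    have hτφ : Measurable fun x => ∫ y, φ y ∂(τ x) :=
      (hφ.stronglyMeasurable.integral_kernel (κ := τ)).measurable
    have := bind_step ν (fun c => Measure.pi fun i => τ (c i)) hκ1 hp (avg φ) (measurable_avg hφ)
      (avg fun x => ∫ y, φ y ∂(τ x)) (measurable_avg hτφ) (∫ x, φ x ∂ξ) (K * ρ) (C * ρ)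
      (fun c => hmz (fun i => τ (c i)) (fun i => inferInstance) φ hφ hb)
      (by
        rw [hξφ φ hφ hb]
        exact hA _ hτφ fun x => integral_abs_le_one _ hb)
    refine this.trans_eq ?_
    rw [hC1]; ring
  have hS2 : ∀ φ : X → ℝ, Measurable φ → (∀ x, |φ x| ≤ 1) →
      ∫⁻ c, ‖avg φ (nud I α c) - ∫ x, φ x ∂ξ‖ₑ ^ p ∂η ≤ C2 * ρ := by
    intro φ hφ hb
    have hm1 : Measurable fun c : Fin N → X => avg φ (nud I α c) :=
      (measurable_avg hφ).comp (measurable_nud I hα)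
    have hm2 : Measurable (avg (N := N) φ) := measurable_avg hφ
    have := bind_step η Measure.dirac Measure.measurable_dirac hp (fun c => avg φ (nud I α c)) hm1
      (avg φ) hm2 (∫ x, φ x ∂ξ) (2 ^ p * ρ) (C1 * ρ)
      (fun c => by
        rw [lintegral_dirac' _ (by fun_prop), hρ, ← ENNReal.mul_rpow_of_nonneg _ _ hp0]
        refine ENNReal.rpow_le_rpow ?_ hp0
        rw [Real.enorm_eq_ofReal_abs]
        refine (ENNReal.ofReal_le_ofReal (nud_close hN I hI α c φ hb)).trans_eq ?_
        rw [ENNReal.ofReal_mul (by norm_num)]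
        simp) (hS1 φ hφ hb)
    rw [Measure.bind_dirac] at this
    refine this.trans_eq ?_
    rw [hC2]; ring
  have hS3 : ∀ φ : X → ℝ, Measurable φ → (∀ x, |φ x| ≤ 1) →
      ∫⁻ c, ‖∫ x, φ x ∂(res g (nud I α c)) - ∫ x, φ x ∂π'‖ₑ ^ p ∂η ≤ C3 * ρ := by
    intro φ hφ hb
    set hφ' : X → ℝ := fun x => h x * φ x with hφ'def
    have hm : Measurable hφ' := hhm.mul hφ
    have hb' : ∀ x, |hφ' x| ≤ 1 := fun x => by
      rw [hφ'def, abs_mul]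
      exact mul_le_one₀ (hh1 x) (abs_nonneg _) (hb x)
    have hπφ : ∫ x, φ x ∂π' = (∫ x, hφ' x ∂ξ) / ∫ x, h x ∂ξ := by
      rw [hπ φ hφ ⟨1, by rintro _ ⟨x, rfl⟩; exact hb x⟩, hξh]
      have : ∫ x, hφ' x ∂ξ = (∫ x, φ x * g x ∂ξ) / G := by
        rw [← integral_div]
        congr 1
        ext x
        simp only [hφ'def, hh]
        ring
      rw [this]
      field_simp
    have hpt : ∀ c : Fin N → X, ‖∫ x, φ x ∂(res g (nud I α c)) - ∫ x, φ x ∂π'‖ₑ ^ p ≤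
        L ^ p * (2 ^ (p - 1) * (‖avg hφ' (nud I α c) - ∫ x, hφ' x ∂ξ‖ₑ ^ p +
          ‖avg h (nud I α c) - ∫ x, h x ∂ξ‖ₑ ^ p)) := by
      intro c
      refine le_trans ?_ (mul_le_mul_right (ENNReal.rpow_add_le_mul_rpow_add_rpow _ _ hp) _)
      rw [← ENNReal.mul_rpow_of_nonneg _ _ hp0]
      refine ENNReal.rpow_le_rpow ?_ hp0
      rw [hπφ]
      simp only [Real.enorm_eq_ofReal_abs, hL]
      rw [← ENNReal.ofReal_add (abs_nonneg _) (abs_nonneg _), ← ENNReal.ofReal_mul (by positivity)]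
      refine ENNReal.ofReal_le_ofReal (ratio hB (integral_abs_le_one _ hb) ?_)
      rw [res_integral hg _ hφ]
      have hsum : 0 < ∑ i, g (nud I α c i) :=
        Finset.sum_pos (fun i _ => hg _) ⟨⟨0, hN⟩, Finset.mem_univ _⟩
      simp only [avg, hφ'def, hh]
      rw [← Finset.sum_div]
      simp_rw [div_mul_eq_mul_div]
      rw [← Finset.sum_div]
      field_simp
    have hm1 : Measurable fun c : Fin N → X => avg hφ' (nud I α c) :=
      (measurable_avg hm).comp (measurable_nud I hα)
    have hm2 : Measurable fun c : Fin N → X => avg h (nud I α c) :=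
      (measurable_avg hhm).comp (measurable_nud I hα)
    refine (lintegral_mono hpt).trans ?_
    rw [lintegral_const_mul _ (by fun_prop), lintegral_const_mul _ (by fun_prop),
      lintegral_add_right _ (by fun_prop)]
    calc _ ≤ L ^ p * (2 ^ (p - 1) * (C2 * ρ + C2 * ρ)) := by
          gcongr
          · exact hS2 _ hm hb'
          · exact hS2 _ hhm hh1
      _ = _ := by rw [hC3]; ring
  refine ⟨?_, ?_⟩
  · rw [hν'']
    exact isProbabilityMeasure_bind hκ2.aemeasurable (ae_of_all _ fun c => inferInstance)
  · intro φ hφ hb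
    have hmW : Measurable fun c : Fin N → X => ∫ x, φ x ∂(res g (nud I α c)) := by
      simp_rw [res_integral hg _ hφ]
      have := measurable_nud I hα
      fun_prop
    rw [hν'']
    have := bind_step η (fun xb => Measure.pi fun _ : Fin N => res g (nud I α xb)) hκ2 hp
      (avg φ) (measurable_avg hφ) _ hmW (∫ x, φ x ∂π') (K * ρ) (C3 * ρ)
      (fun c => by
        have h1 := hmz (fun _ => res g (nud I α c)) (fun i => inferInstance) φ hφ hb
        have hN' : (N : ℝ) ≠ 0 := by exact_mod_cast hN.ne'
        have h2 : (1 / (N : ℝ)) * ∑ _i : Fin N, ∫ y, φ y ∂(res g (nud I α c)) =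
            ∫ y, φ y ∂(res g (nud I α c)) := by
          simp only [Finset.sum_const, Finset.card_univ, Fintype.card_fin, nsmul_eq_mul]
          field_simp
        rw [h2] at h1
        exact h1) (hS3 φ hφ hb)
    refine this.trans_eq ?_
    ring

end NuPF

theorem stmt_15 {X : Type*} [MeasurableSpace X]
    (π0 : Measure X) [IsProbabilityMeasure π0]
    (τ : ℕ → Kernel X X) (hτ : ∀ s, IsMarkovKernel (τ s))
    (g : ℕ → X → ℝ) (hgm : ∀ s, Measurable (g s)) (hgpos : ∀ s x, 0 < g s x)
    (hgb : ∀ s, BddAbove (Set.range (g s)))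
    (π ξ : ℕ → Measure X)
    -- the optimal filter: prediction and Bayes update
    (hπ0 : π 0 = π0)
    (hξ : ∀ s, ξ (s + 1) = (π s).bind fun x => τ (s + 1) x)
    (hgpred : ∀ s, 0 < ∫ x, g (s + 1) x ∂(ξ (s + 1)))
    (hπ : ∀ s (φ : X → ℝ), Measurable φ → BddAbove (Set.range fun x => |φ x|) →
      ∫ x, φ x ∂(π (s + 1)) =
        (∫ x, φ x * g (s + 1) x ∂(ξ (s + 1))) / ∫ x, g (s + 1) x ∂(ξ (s + 1)))
    (α : ℕ → X → X) (hα : ∀ s, Measurable (α s))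
    (T t : ℕ) (ht1 : 1 ≤ t) (htT : t ≤ T)
    (p : ℝ) (hp : 1 ≤ p) :
    ∃ c : ℝ, ∀ (N : ℕ), 0 < N →
      ∀ (I : ℕ → Finset (Fin N)), (∀ s, ((I s).card : ℝ) ≤ Real.sqrt N) →
      ∀ (ν : ℕ → Measure (Fin N → X)),
        -- law of the NuPF particle configuration: initialization, and one recursive step
        -- = sampling via the kernel, nudging of the particles in `I`, weighting by the
        -- likelihood and multinomial resampling
        ν 0 = Measure.pi (fun _ : Fin N => π0) →
        (∀ s, ν (s + 1) = (ν s).bind fun cprev =>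
          (Measure.pi fun i => τ (s + 1) (cprev i)).bind fun xb =>
            Measure.pi fun _ : Fin N =>
              ∑ i : Fin N,
                (ENNReal.ofReal
                    (g (s + 1) (if i ∈ I (s + 1) then α (s + 1) (xb i) else xb i)) /
                  ∑ j : Fin N, ENNReal.ofReal
                    (g (s + 1) (if j ∈ I (s + 1) then α (s + 1) (xb j) else xb j))) •
                Measure.dirac (if i ∈ I (s + 1) then α (s + 1) (xb i) else xb i)) →
      ∀ φ : X → ℝ, Measurable φ → BddAbove (Set.range fun x => |φ x|) →
        (∫ cfg, |(1 / (N : ℝ)) * (∑ i, φ (cfg i)) - ∫ x, φ x ∂(π t)| ^ p ∂(ν t)) ^ (1 / p)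
          ≤ c * (⨆ x, |φ x|) / Real.sqrt N := by
  
  have hp0 : 0 ≤ p := by linarith
  have hπp : ∀ s, IsProbabilityMeasure (π s) := by
    intro s
    cases s with
    | zero => rw [hπ0]; infer_instance
    | succ s =>
      have h1 := hπ s (fun _ => 1) measurable_const ⟨1, by rintro _ ⟨x, rfl⟩; simp⟩
      simp only [one_mul, div_self (hgpred s).ne', integral_const, smul_eq_mul, mul_one] at h1
      constructor
      have h2 : (π (s + 1) Set.univ).toReal = 1 := h1
      exact (ENNReal.toReal_eq_one_iff _).1 h2
  have main : ∀ t : ℕ, ∃ C : ENNReal, C ≠ ⊤ ∧ ∀ (N : ℕ), 0 < N →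
      ∀ (I : ℕ → Finset (Fin N)), (∀ s, ((I s).card : ℝ) ≤ Real.sqrt N) →
      ∀ (ν : ℕ → Measure (Fin N → X)),
        ν 0 = Measure.pi (fun _ : Fin N => π0) →
        (∀ s, ν (s + 1) = (ν s).bind fun c =>
          (Measure.pi fun i => τ (s + 1) (c i)).bind fun xb => Measure.pi fun _ : Fin N =>
            NuPF.res (g (s + 1)) (NuPF.nud (I (s + 1)) (α (s + 1)) xb)) →
      IsProbabilityMeasure (ν t) ∧ ∀ φ : X → ℝ, Measurable φ → (∀ x, |φ x| ≤ 1) →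
        ∫⁻ c, ‖NuPF.avg φ c - ∫ x, φ x ∂(π t)‖ₑ ^ p ∂(ν t) ≤
          C * ENNReal.ofReal (1 / Real.sqrt N) ^ p := by
    intro t
    induction t with
    | zero =>
      refine ⟨ENNReal.ofReal (2 * p ^ p * Real.exp (1 / 2)), ENNReal.ofReal_ne_top, ?_⟩
      intro N hN I hI ν hν0 hν
      rw [hν0, hπ0]
      refine ⟨inferInstance, fun φ hφ hb => ?_⟩
      have h1 := NuPF.mz hN (fun _ => π0) hp φ hφ hb
      have hN' : (N : ℝ) ≠ 0 := by exact_mod_cast hN.ne'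
      have h2 : (1 / (N : ℝ)) * ∑ _i : Fin N, ∫ y, φ y ∂π0 = ∫ y, φ y ∂π0 := by
        simp only [Finset.sum_const, Finset.card_univ, Fintype.card_fin, nsmul_eq_mul]
        field_simp
      rw [h2] at h1
      refine h1.trans_eq ?_
      rw [ENNReal.ofReal_mul (by positivity), ENNReal.ofReal_rpow_of_nonneg (by positivity) hp0]
    | succ s ih =>
      obtain ⟨C, hC, ih⟩ := ih
      have := hτ (s + 1)
      have := hπp s
      obtain ⟨C', hC', h⟩ := NuPF.step (τ (s + 1)) (g (s + 1)) (hgm _) (hgpos _) (hgb _) (π s)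
        (π (s + 1)) (ξ (s + 1)) (hξ s) (hgpred s) (hπ s) (α (s + 1)) (hα _) hp C hC
      refine ⟨C', hC', fun N hN I hI ν hν0 hν => ?_⟩
      obtain ⟨h1, h2⟩ := ih N hN I hI ν hν0 hν
      exact h N hN (I (s + 1)) (hI _) (ν s) h1 h2 (ν (s + 1)) (hν s)
  obtain ⟨C, hC, h⟩ := main t
  refine ⟨C.toReal ^ (1 / p), fun N hN I hI ν hν0 hν φ hφ hφb => ?_⟩
  obtain ⟨hprob, h⟩ := h N hN I hI ν hν0 hν
  set B : ℝ := ⨆ x, |φ x| with hB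
  have hφB : ∀ x, |φ x| ≤ B := fun x => le_ciSup hφb x
  have hB0 : 0 ≤ B := Real.iSup_nonneg fun x => abs_nonneg _
  have hN' : (0 : ℝ) < N := by exact_mod_cast hN
  have hs : (0 : ℝ) < Real.sqrt N := Real.sqrt_pos.2 hN'
  have hCr : 0 ≤ C.toReal := ENNReal.toReal_nonneg
  suffices hmain : ∫ cfg, |(1 / (N : ℝ)) * (∑ i, φ (cfg i)) - ∫ x, φ x ∂(π t)| ^ p ∂(ν t) ≤
      (C.toReal ^ (1 / p) * B / Real.sqrt N) ^ p by
    refine (Real.rpow_le_rpow (integral_nonneg fun _ => by positivity) hmain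
      (by positivity)).trans_eq ?_
    rw [← Real.rpow_mul (by positivity), mul_one_div_cancel (by linarith), Real.rpow_one]
  rcases hB0.eq_or_lt with hB0 | hBpos
  · have : φ = 0 := by
      ext x
      have := hφB x
      rw [← hB0] at this
      exact abs_nonpos_iff.1 this
    simp only [this, Pi.zero_apply, Finset.sum_const_zero, mul_zero, integral_zero, sub_zero,
      abs_zero, Real.zero_rpow (by linarith : p ≠ 0)]
    positivity
  · have hψm : Measurable fun x => φ x / B := hφ.div_const _
    have h1 := h (fun x => φ x / B) hψm fun x => by
      rw [abs_div, abs_of_pos hBpos]; exact (div_le_one hBpos).2 (hφB x)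
    have heq : ∀ cfg : Fin N → X, |(1 / (N : ℝ)) * (∑ i, φ (cfg i)) - ∫ x, φ x ∂(π t)| ^ p =
        B ^ p * |NuPF.avg (fun x => φ x / B) cfg - ∫ x, φ x / B ∂(π t)| ^ p := by
      intro cfg
      rw [← Real.mul_rpow hBpos.le (abs_nonneg _), integral_div, NuPF.avg, ← Finset.sum_div]
      congr 1
      conv_rhs => rw [← abs_of_pos hBpos, ← abs_mul, abs_of_pos hBpos]
      congr 1
      field_simp
    simp_rw [heq]
    rw [integral_const_mul]
    have hm : Measurable (NuPF.avg (N := N) fun x => φ x / B) := NuPF.measurable_avg hψm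
    have h2 : ∫ cfg, |NuPF.avg (fun x => φ x / B) cfg - ∫ x, φ x / B ∂(π t)| ^ p ∂(ν t) ≤
        C.toReal * (1 / Real.sqrt N) ^ p := by
      rw [integral_eq_lintegral_of_nonneg_ae (ae_of_all _ fun _ => by positivity)
        (by fun_prop)]
      refine ENNReal.toReal_le_of_le_ofReal (by positivity) ?_
      rw [ENNReal.ofReal_mul hCr, ENNReal.ofReal_toReal hC,
        ← ENNReal.ofReal_rpow_of_nonneg (by positivity) hp0]
      refine le_trans (le_of_eq ?_) h1
      refine lintegral_congr fun c => ?_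
      rw [Real.enorm_eq_ofReal_abs, ENNReal.ofReal_rpow_of_nonneg (abs_nonneg _) hp0]
    calc _ ≤ B ^ p * (C.toReal * (1 / Real.sqrt N) ^ p) := by gcongr
      _ = _ := by
        rw [mul_div_assoc, Real.mul_rpow (by positivity) (by positivity), ← Real.rpow_mul hCr,
          one_div_mul_cancel (by linarith), Real.rpow_one, div_eq_mul_one_div B,
          Real.mul_rpow hBpos.le (by positivity)]
        ring
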